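/- Let d ≥ 2. For every unimodular lattice Λ ⊆ K̃^d, the Mordell constant satisfies κ(Λ) = q^{-d}; that is, there exists an admissible box for Λ of volume q^{-d}, and every box of volume strictly greater than q^{-d} contains a nonzero point of Λ. In particular the Gruber–Mordell spectrum MG_d = {κ(Λ) : Λ unimodular lattice in K̃^d} equals {q^{-d}}. -/

import Mathlib

noncomputable section

open scoped Classical

variable (Fq : Type) [Field Fq] [Fintype Fq]

/-- `K̃ = 𝔽_q((x⁻¹))`, realized as formal Laurent series in `t = x⁻¹`. -/
abbrev Kt := LaurentSeries Fq

/-- The element `x` of `K̃` (the inverse of the Laurent series variable). -/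
def Kx : Kt Fq := HahnSeries.single (-1 : ℤ) 1

/-- Absolute value `|f| = q^{deg f}`, i.e. `q^{-order f}` in terms of `t = x⁻¹`. -/
def Kabs (f : Kt Fq) : ℝ := if f = 0 then 0 else (Fintype.card Fq : ℝ) ^ (-f.order)

/-- The ring embedding of `R = 𝔽_q[x]` into `K̃`. -/
def polyK : Polynomial Fq →+* Kt Fq := (Polynomial.aeval (Kx Fq)).toRingHom

/-- Sup norm on `K̃^d`. -/
def vnorm {d : ℕ} (v : Fin d → Kt Fq) : ℝ := ⨆ i, Kabs Fq (v i)

/-- The lattice `g·R^d`. -/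
def lattice {d : ℕ} (g : Matrix (Fin d) (Fin d) (Kt Fq)) : Set (Fin d → Kt Fq) :=
  {v | ∃ c : Fin d → Polynomial Fq, v = g.mulVec fun j => polyK Fq (c j)}

/-- `i`-th successive minimum of `Λ` with respect to a norm `nrm`: the least `r > 0` such that
`Λ` contains `i` linearly independent vectors of norm at most `r`. -/
def minimaN {d : ℕ} (nrm : (Fin d → Kt Fq) → ℝ) (Λ : Set (Fin d → Kt Fq)) (i : ℕ) : ℝ :=
  sInf {r : ℝ | 0 < r ∧ ∃ v : Fin i → Fin d → Kt Fq,
    (∀ j, v j ∈ Λ) ∧ LinearIndependent (Kt Fq) v ∧ ∀ j, nrm (v j) ≤ r}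

/-- `i`-th successive minimum with respect to the sup norm. -/
def minima {d : ℕ} (Λ : Set (Fin d → Kt Fq)) (i : ℕ) : ℝ := minimaN Fq (vnorm Fq) Λ i

/-- Covering radius of `Λ` with respect to the norm `nrm`. -/
def covRad {d : ℕ} (nrm : (Fin d → Kt Fq) → ℝ) (Λ : Set (Fin d → Kt Fq)) : ℝ :=
  ⨆ w : Fin d → Kt Fq, ⨅ u : Λ, nrm (w - u.1)

/-- Length of the shortest nonzero vector of `Λ`. -/
def ell {d : ℕ} (Λ : Set (Fin d → Kt Fq)) : ℝ :=
  sInf {r : ℝ | ∃ v ∈ Λ, v ≠ 0 ∧ vnorm Fq v = r}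

/-- `Λ` is well rounded: it contains `d` linearly independent vectors of norm `ℓ(Λ)`. -/
def IsWellRounded {d : ℕ} (Λ : Set (Fin d → Kt Fq)) : Prop :=
  ∃ v : Fin d → Fin d → Kt Fq, (∀ j, v j ∈ Λ) ∧ LinearIndependent (Kt Fq) v ∧
    ∀ j, vnorm Fq (v j) = ell Fq Λ

/-- The multiplicative "norm" `N(v) = ∏ |v i|`. -/
def Nprod {d : ℕ} (v : Fin d → Kt Fq) : ℝ := ∏ i, Kabs Fq (v i)

/-- The Minkowski function `μ(Λ) = sup_w inf_{u ∈ Λ} N(w - u)`. -/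
def mink {d : ℕ} (Λ : Set (Fin d → Kt Fq)) : ℝ :=
  ⨆ w : Fin d → Kt Fq, ⨅ u : Λ, Nprod Fq (w - u.1)


set_option linter.unusedSectionVars false

theorem smul_vec_eq {d : ℕ} (a : Fq) (v : Fin d → Kt Fq) :
    a • v = (HahnSeries.C a : Kt Fq) • v := by
  funext i
  change a • v i = HahnSeries.C a * v i
  rw [HahnSeries.C_mul_eq_smul]

theorem polyK_C (a : Fq) : polyK Fq (Polynomial.C a) = HahnSeries.C a := by
  change Polynomial.aeval (Kx Fq) (Polynomial.C a) = _
  rw [Polynomial.aeval_C]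
  rw [HahnSeries.algebraMap_apply']
  simp

/-- the linear map `c ↦ g c`. -/
def Lg {d : ℕ} (g : Matrix (Fin d) (Fin d) (Kt Fq)) :
    (Fin d → Polynomial Fq) →ₗ[Fq] (Fin d → Kt Fq) where
  toFun c := g.mulVec fun j => polyK Fq (c j)
  map_add' a b := by
    rw [← Matrix.mulVec_add]; congr 1; funext j; simp
  map_smul' a b := by
    have : (fun j => polyK Fq ((a • b) j)) = a • (fun j => polyK Fq (b j)) := by
      funext j
      change polyK Fq (a • b j) = a • polyK Fq (b j)
      rw [Polynomial.smul_eq_C_mul, map_mul, polyK_C, HahnSeries.C_mul_eq_smul]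
    rw [this, smul_vec_eq, Matrix.mulVec_smul, ← smul_vec_eq]; rfl

/-- Boxes as subspaces. -/
def Bx {d : ℕ} (s : Fin d → ℤ) : Submodule Fq (Fin d → Kt Fq) where
  carrier := {v | ∀ i, ∀ m < s i, (v i).coeff m = 0}
  zero_mem' := by intro i m _; simp
  add_mem' := by
    intro a b ha hb i m hm
    simp [ha i m hm, hb i m hm]
  smul_mem' := by
    intro c a ha i m hm
    simp [ha i m hm]

/-- Lattice points in the box. -/
def V {d : ℕ} (g : Matrix (Fin d) (Fin d) (Kt Fq)) (s : Fin d → ℤ) :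
    Submodule Fq (Fin d → Kt Fq) := LinearMap.range (Lg Fq g) ⊓ Bx Fq s

variable {Fq}

theorem mem_Bx {d : ℕ} {s : Fin d → ℤ} {v : Fin d → Kt Fq} :
    v ∈ Bx Fq s ↔ ∀ i, ∀ m < s i, (v i).coeff m = 0 := Iff.rfl

theorem mem_lat {d : ℕ} {g : Matrix (Fin d) (Fin d) (Kt Fq)} {v : Fin d → Kt Fq} :
    v ∈ LinearMap.range (Lg Fq g) ↔ v ∈ lattice Fq g := by
  constructor
  · rintro ⟨c, rfl⟩; exact ⟨c, rfl⟩
  · rintro ⟨c, rfl⟩; exact ⟨c, rfl⟩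

theorem step_ind {d : ℕ} (R : (Fin d → ℤ) → (Fin d → ℤ) → Prop) (hr : ∀ s, R s s)
    (ht : ∀ a b c, R a b → R b c → R a c) (hs : ∀ s i, R s (s + Pi.single i 1)) :
    ∀ s s', s ≤ s' → R s s' := by
  have key : ∀ n : ℕ, ∀ s s' : Fin d → ℤ, s ≤ s' → ∑ i, (s' i - s i) = n → R s s' := by
    intro n
    induction n with
    | zero =>
      intro s s' h hn
      have h0 : ∀ i ∈ Finset.univ, s' i - s i = 0 :=
        (Finset.sum_eq_zero_iff_of_nonneg (fun i _ => sub_nonneg.2 (h i))).1 (by simpa using hn)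
      have : s = s' := by
        funext i; have := h0 i (Finset.mem_univ i); omega
      subst this; exact hr _
    | succ n ih =>
      intro s s' h hn
      obtain ⟨i, hi⟩ : ∃ i, s i < s' i := by
        by_contra hc
        push Not at hc
        have : s = s' := le_antisymm h hc
        subst this
        simp at hn
        omega
      refine ht _ _ _ (hs s i) (ih _ _ ?_ ?_)
      · intro j
        by_cases hj : j = i
        · subst hj; simp; omega
        · simp [hj]; exact h j
      · have : ∑ j, (s' j - (s + Pi.single i 1 : Fin d → ℤ) j) = ∑ j, (s' j - s j) - 1 := by
          simp [Finset.sum_add_distrib]; ring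
        rw [this, hn]; push_cast; ring
  intro s s' h
  refine key (∑ i, (s' i - s i)).toNat s s' h ?_
  rw [Int.toNat_of_nonneg (Finset.sum_nonneg fun i _ => sub_nonneg.2 (h i))]

theorem Bx_anti {d : ℕ} {s s' : Fin d → ℤ} (h : s ≤ s') : Bx Fq s' ≤ Bx Fq s :=
  fun _ hv i m hm => hv i m (lt_of_lt_of_le hm (h i))

theorem V_anti {d : ℕ} (g : Matrix (Fin d) (Fin d) (Kt Fq)) {s s' : Fin d → ℤ} (h : s ≤ s') :
    V Fq g s' ≤ V Fq g s := inf_le_inf_left _ (Bx_anti h)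

theorem le_step {d : ℕ} (s : Fin d → ℤ) (i : Fin d) : s ≤ s + Pi.single i 1 := by
  intro j
  by_cases hj : j = i
  · subst hj; simp
  · simp [hj]

/-- the coefficient functional -/
def cf {d : ℕ} (i : Fin d) (m : ℤ) : (Fin d → Kt Fq) →ₗ[Fq] Fq where
  toFun v := (v i).coeff m
  map_add' _ _ := by simp
  map_smul' _ _ := by simp

theorem V_step {d : ℕ} (g : Matrix (Fin d) (Fin d) (Kt Fq)) (s : Fin d → ℤ) (i : Fin d) :
    V Fq g (s + Pi.single i 1) = V Fq g s ⊓ LinearMap.ker (cf i (s i)) := by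
  apply le_antisymm
  · refine le_inf (V_anti g (le_step s i)) ?_
    intro v hv
    exact hv.2 i (s i) (by simp)
  · rintro v ⟨⟨h1, h2⟩, h3⟩
    refine ⟨h1, ?_⟩
    intro j m hm
    by_cases hj : j = i
    · subst hj
      simp at hm
      rcases lt_or_eq_of_le hm with h | h
      · exact h2 _ _ h
      · subst h; exact h3
    · simp [hj] at hm
      exact h2 j m hm

theorem step_fin {d : ℕ} (g : Matrix (Fin d) (Fin d) (Kt Fq)) (s : Fin d → ℤ) (i : Fin d)
    (h : Module.Finite Fq (V Fq g (s + Pi.single i 1))) :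
    Module.Finite Fq (V Fq g s) := by
  have hfg : (V Fq g (s + Pi.single i 1)).FG := Module.Finite.iff_fg.1 h
  rw [V_step] at hfg
  rw [Module.Finite.iff_fg]
  exact Submodule.fg_of_fg_map_of_fg_inf_ker (cf i (s i)) (IsNoetherian.noetherian _) hfg

theorem step_rank {d : ℕ} (g : Matrix (Fin d) (Fin d) (Kt Fq)) (s : Fin d → ℤ) (i : Fin d)
    (h : Module.Finite Fq (V Fq g s)) :
    Module.finrank Fq (V Fq g s) ≤ Module.finrank Fq (V Fq g (s + Pi.single i 1)) + 1 := by
  have h1 := LinearMap.finrank_range_add_finrank_ker ((cf i (s i)).domRestrict (V Fq g s))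
  have h2 : Module.finrank Fq (LinearMap.range ((cf i (s i)).domRestrict (V Fq g s))) ≤ 1 := by
    simpa using Submodule.finrank_le (LinearMap.range ((cf i (s i)).domRestrict (V Fq g s)))
  have h3 : Module.finrank Fq (LinearMap.ker ((cf i (s i)).domRestrict (V Fq g s))) =
      Module.finrank Fq (V Fq g (s + Pi.single i 1)) := by
    have : (LinearMap.ker ((cf i (s i)).domRestrict (V Fq g s))).map (V Fq g s).subtype =
        V Fq g (s + Pi.single i 1) := by
      rw [V_step]
      ext v
      simp only [Submodule.mem_map, LinearMap.mem_ker, Submodule.mem_inf]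
      constructor
      · rintro ⟨w, hw, rfl⟩
        exact ⟨w.2, hw⟩
      · rintro ⟨h1, h2⟩
        exact ⟨⟨v, h1⟩, h2, rfl⟩
    rw [← this]
    exact (Submodule.equivMapOfInjective _ (Submodule.subtype_injective _) _).finrank_eq
  omega

theorem mono {d : ℕ} (g : Matrix (Fin d) (Fin d) (Kt Fq)) (s s' : Fin d → ℤ) (hs : s ≤ s') :
    (Module.Finite Fq (V Fq g s') → Module.Finite Fq (V Fq g s)) ∧
    (Module.Finite Fq (V Fq g s) → Module.Finite Fq (V Fq g s') ∧
      (Module.finrank Fq (V Fq g s) : ℤ) - ∑ i, (1 - s i) ≤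
      (Module.finrank Fq (V Fq g s') : ℤ) - ∑ i, (1 - s' i)) := by
  refine step_ind (fun s s' => (Module.Finite Fq (V Fq g s') → Module.Finite Fq (V Fq g s)) ∧
    (Module.Finite Fq (V Fq g s) → Module.Finite Fq (V Fq g s') ∧
      (Module.finrank Fq (V Fq g s) : ℤ) - ∑ i, (1 - s i) ≤
      (Module.finrank Fq (V Fq g s') : ℤ) - ∑ i, (1 - s' i))) ?_ ?_ ?_ s s' hs
  · intro s; exact ⟨id, fun h => ⟨h, le_rfl⟩⟩
  · rintro a b c ⟨h1, h2⟩ ⟨h3, h4⟩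
    exact ⟨fun h => h1 (h3 h), fun h => ⟨(h4 (h2 h).1).1, (h2 h).2.trans (h4 (h2 h).1).2⟩⟩
  · intro s i
    refine ⟨step_fin g s i, fun h => ⟨?_, ?_⟩⟩
    · exact Submodule.finiteDimensional_of_le (V_anti g (le_step s i))
    · have := step_rank g s i h
      have e : ∑ j, (1 - (s + Pi.single i 1 : Fin d → ℤ) j) = ∑ j, (1 - s j) - 1 := by
        simp [Finset.sum_add_distrib]; ring
      rw [e]
      omega

/-- Riemann-Roch property with degree shift `k`. -/
def Q {d : ℕ} (g : Matrix (Fin d) (Fin d) (Kt Fq)) (k : ℤ) : Prop :=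
  (∀ s, Module.Finite Fq (V Fq g s) ∧
    ∑ i, (1 - s i) - k ≤ (Module.finrank Fq (V Fq g s) : ℤ)) ∧
  ∃ s, (Module.finrank Fq (V Fq g s) : ℤ) ≤ ∑ i, (1 - s i) - k

/-- multiplication by a matrix, as an `Fq`-linear map -/
def mvl {d : ℕ} (A : Matrix (Fin d) (Fin d) (Kt Fq)) :
    (Fin d → Kt Fq) →ₗ[Fq] (Fin d → Kt Fq) where
  toFun v := A.mulVec v
  map_add' a b := Matrix.mulVec_add _ _ _
  map_smul' a b := by rw [smul_vec_eq, Matrix.mulVec_smul, ← smul_vec_eq]; rfl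

theorem transport {d : ℕ} (A B g : Matrix (Fin d) (Fin d) (Kt Fq)) (s s' : Fin d → ℤ)
    (hAB : A * B = 1) (hBA : B * A = 1)
    (hA : ∀ v ∈ Bx Fq s, A.mulVec v ∈ Bx Fq s')
    (hB : ∀ v ∈ Bx Fq s', B.mulVec v ∈ Bx Fq s)
    (hf : Module.Finite Fq (V Fq g s)) :
    Module.Finite Fq (V Fq (A * g) s') ∧
      Module.finrank Fq (V Fq (A * g) s') = Module.finrank Fq (V Fq g s) := by
  have hmap : V Fq (A * g) s' = (V Fq g s).map (mvl A) := by
    apply le_antisymm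
    · rintro v ⟨⟨c, hc⟩, hv⟩
      refine ⟨B.mulVec v, ⟨⟨c, ?_⟩, hB v hv⟩, ?_⟩
      · rw [← hc]
        change g.mulVec _ = B.mulVec ((A * g).mulVec _)
        rw [Matrix.mulVec_mulVec, ← Matrix.mul_assoc, hBA, Matrix.one_mul]
      · change A.mulVec (B.mulVec v) = v
        rw [Matrix.mulVec_mulVec, hAB, Matrix.one_mulVec]
    · rintro _ ⟨v, ⟨⟨c, rfl⟩, hv⟩, rfl⟩
      refine ⟨⟨c, ?_⟩, hA _ hv⟩
      change (A * g).mulVec _ = A.mulVec (g.mulVec _)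
      rw [Matrix.mulVec_mulVec]
  have hinj : Function.Injective (mvl (Fq := Fq) A) := by
    intro v w h
    have h' : B.mulVec (A.mulVec v) = B.mulVec (A.mulVec w) := congrArg B.mulVec h
    simpa [Matrix.mulVec_mulVec, hBA] using h'
  rw [hmap]
  exact ⟨Module.Finite.map _ _, (Submodule.equivMapOfInjective _ hinj _).finrank_eq.symm⟩

theorem mul_coeff_zero (c f : Kt Fq) (b : ℤ) (hf : ∀ m < b, f.coeff m = 0) :
    ∀ m < c.order + b, (c * f).coeff m = 0 := by
  intro m hm
  by_cases hc : c = 0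
  · simp [hc]
  by_cases hf0 : f = 0
  · simp [hf0]
  apply HahnSeries.coeff_eq_zero_of_lt_order
  rw [HahnSeries.order_mul hc hf0]
  have := (HahnSeries.le_order_iff_forall hf0).2 hf
  omega

theorem transvec_box {d : ℕ} (i j : Fin d) (c : Kt Fq) (s : Fin d → ℤ)
    (hs : s i ≤ c.order + s j) (v : Fin d → Kt Fq) (hv : v ∈ Bx Fq s) :
    (Matrix.transvection i j c).mulVec v ∈ Bx Fq s := by
  have e : (Matrix.transvection i j c).mulVec v = v + Pi.single i (c * v j) := by
    rw [Matrix.transvection, Matrix.add_mulVec, Matrix.one_mulVec, Matrix.single_mulVec]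
    rfl
  rw [e]
  refine Submodule.add_mem _ hv ?_
  intro l m hm
  by_cases hl : l = i
  · subst hl
    simp only [Pi.single_eq_same]
    exact mul_coeff_zero c (v j) (s j) (hv j) m (by omega)
  · simp [hl]

theorem Q_transvec {d : ℕ} (i j : Fin d) (hij : i ≠ j) (c : Kt Fq)
    (g : Matrix (Fin d) (Fin d) (Kt Fq)) (k : ℤ) (h : Q g k) :
    Q (Matrix.transvection i j c * g) k := by
  have hlow : ∀ s : Fin d → ℤ, ∃ s' ≤ s, s' i ≤ c.order + s' j := by
    intro s
    refine ⟨Function.update s i (min (s i) (c.order + s j)), ?_, ?_⟩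
    · intro l
      by_cases hl : l = i
      · subst hl; simp
      · simp [hl]
    · simp [hij.symm]
  have htr : ∀ s : Fin d → ℤ, s i ≤ c.order + s j →
      Module.Finite Fq (V Fq (Matrix.transvection i j c * g) s) ∧
      Module.finrank Fq (V Fq (Matrix.transvection i j c * g) s) =
        Module.finrank Fq (V Fq g s) := by
    intro s hs
    refine transport _ (Matrix.transvection i j (-c)) g s s ?_ ?_ ?_ ?_ (h.1 s).1
    · rw [Matrix.transvection_mul_transvection_same _ _ hij]; simp
    · rw [Matrix.transvection_mul_transvection_same _ _ hij]; simp
    · exact transvec_box i j c s hs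
    · exact transvec_box i j (-c) s (by rwa [HahnSeries.order_neg])
  constructor
  · intro s
    obtain ⟨s', hle, hs'⟩ := hlow s
    obtain ⟨h1, h2⟩ := htr s' hs'
    have h3 := (mono _ s' s hle).2 h1
    refine ⟨h3.1, ?_⟩
    have h4 := h3.2
    have h5 := (h.1 s').2
    rw [h2] at h4
    linarith
  · obtain ⟨s, hs⟩ := h.2
    obtain ⟨s', hle, hs'⟩ := hlow s
    refine ⟨s', ?_⟩
    obtain ⟨h1, h2⟩ := htr s' hs'
    have h3 := ((mono g s' s hle).2 (h.1 s').1).2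
    rw [h2]
    linarith

theorem diag_box {d : ℕ} (D : Fin d → Kt Fq) (s : Fin d → ℤ)
    (v : Fin d → Kt Fq) (hv : v ∈ Bx Fq s) :
    (Matrix.diagonal D).mulVec v ∈ Bx Fq (fun i => (D i).order + s i) := by
  intro i m hm
  rw [Matrix.mulVec_diagonal]
  exact mul_coeff_zero _ _ _ (hv i) m hm

theorem order_inv' (c : Kt Fq) (hc : c ≠ 0) : (c⁻¹).order = - c.order := by
  have := HahnSeries.order_mul hc (inv_ne_zero hc)
  rw [mul_inv_cancel₀ hc, HahnSeries.order_one] at this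
  omega

theorem order_prod' {ι : Type} (t : Finset ι) (D : ι → Kt Fq) (h : ∀ i, D i ≠ 0) :
    (∏ i ∈ t, D i).order = ∑ i ∈ t, (D i).order := by
  induction t using Finset.induction_on with
  | empty => simp
  | insert a t ha ih =>
    rw [Finset.prod_insert ha, Finset.sum_insert ha,
      HahnSeries.order_mul (h a) (Finset.prod_ne_zero_iff.2 fun i _ => h i), ih]

theorem Q_diag {d : ℕ} (D : Fin d → Kt Fq) (hD : ∀ i, D i ≠ 0)
    (g : Matrix (Fin d) (Fin d) (Kt Fq)) (k : ℤ) (h : Q g k) :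
    Q (Matrix.diagonal D * g) (k - ∑ i, (D i).order) := by
  have htr : ∀ s : Fin d → ℤ,
      Module.Finite Fq (V Fq (Matrix.diagonal D * g) (fun i => (D i).order + s i)) ∧
      Module.finrank Fq (V Fq (Matrix.diagonal D * g) (fun i => (D i).order + s i)) =
        Module.finrank Fq (V Fq g s) := by
    intro s
    refine transport _ (Matrix.diagonal fun i => (D i)⁻¹) g s _ ?_ ?_ ?_ ?_ (h.1 s).1
    · rw [Matrix.diagonal_mul_diagonal]; simp [hD]
    · rw [Matrix.diagonal_mul_diagonal]; simp [hD]
    · exact diag_box D s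
    · intro v hv
      have := diag_box (fun i => (D i)⁻¹) _ v hv
      convert this using 2
      funext i
      rw [order_inv' _ (hD i)]; ring
  have hsum : ∀ s : Fin d → ℤ, ∑ i, (1 - ((D i).order + s i)) =
      ∑ i, (1 - s i) - ∑ i, (D i).order := by
    intro s
    rw [← Finset.sum_sub_distrib]
    exact Finset.sum_congr rfl fun i _ => by ring
  constructor
  · intro s
    have e : s = fun i => (D i).order + (s i - (D i).order) := by funext i; ring
    have h1 := htr (fun i => s i - (D i).order)
    have h2 := hsum (fun i => s i - (D i).order)
    have h3 := (h.1 (fun i => s i - (D i).order)).2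
    rw [← e] at h1
    refine ⟨h1.1, ?_⟩
    rw [h1.2]
    have h4 : ∑ i, (1 - s i) = ∑ i, (1 - ((D i).order + (s i - (D i).order))) :=
      Finset.sum_congr rfl fun i _ => by ring
    linarith
  · obtain ⟨s, hs⟩ := h.2
    refine ⟨fun i => (D i).order + s i, ?_⟩
    rw [(htr s).2, hsum]
    linarith

theorem polyK_X : polyK Fq Polynomial.X = Kx Fq := by
  change Polynomial.aeval (Kx Fq) Polynomial.X = _
  simp

theorem polyK_coeff (p : Polynomial Fq) (n : ℕ) :
    (polyK Fq p).coeff (-(n : ℤ)) = p.coeff n := by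
  induction p using Polynomial.induction_on' with
  | add p q hp hq => simp [hp, hq]
  | monomial m a =>
    rw [← Polynomial.C_mul_X_pow_eq_monomial, map_mul, map_pow, polyK_C, polyK_X, Kx,
      HahnSeries.single_pow, HahnSeries.C_mul_eq_smul]
    simp only [HahnSeries.coeff_smul, HahnSeries.coeff_single, Polynomial.coeff_C_mul,
      Polynomial.coeff_X_pow]
    by_cases h : n = m
    · subst h; simp
    · simp [h]

theorem polyK_eq_zero {p : Polynomial Fq} (h : ∀ m < (1 : ℤ), (polyK Fq p).coeff m = 0) :
    p = 0 := by
  ext n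
  rw [← polyK_coeff, h _ (by omega)]; simp

theorem polyK_inj : Function.Injective (polyK Fq) := by
  rw [injective_iff_map_eq_zero]
  intro p hp
  exact polyK_eq_zero (by simp [hp])

theorem V_one_one {d : ℕ} : V Fq (1 : Matrix (Fin d) (Fin d) (Kt Fq)) (fun _ => 1) = ⊥ := by
  rw [eq_bot_iff]
  rintro v ⟨⟨c, rfl⟩, hv⟩
  have : c = 0 := by
    funext i
    apply polyK_eq_zero
    intro m hm
    have := hv i m hm
    simpa [Lg] using this
  subst this
  simp

theorem V_one_rank {d : ℕ} (k : ℕ)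
    (hf : Module.Finite Fq (V Fq (1 : Matrix (Fin d) (Fin d) (Kt Fq)) (fun _ => 1 - (k : ℤ)))) :
    d * k ≤ Module.finrank Fq (V Fq (1 : Matrix (Fin d) (Fin d) (Kt Fq))
      (fun _ => 1 - (k : ℤ))) := by
  let J : (Fin d → Polynomial.degreeLT Fq k) →ₗ[Fq] (Fin d → Polynomial Fq) :=
    LinearMap.pi fun i => (Polynomial.degreeLT Fq k).subtype ∘ₗ LinearMap.proj i
  have hJ : ∀ c, (Lg Fq (1 : Matrix (Fin d) (Fin d) (Kt Fq)) ∘ₗ J) c ∈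
      V Fq (1 : Matrix (Fin d) (Fin d) (Kt Fq)) (fun _ => 1 - (k : ℤ)) := by
    intro c
    refine ⟨⟨J c, rfl⟩, ?_⟩
    intro i m hm
    replace hm : m < 1 - (k : ℤ) := hm
    have e : (Lg Fq (1 : Matrix (Fin d) (Fin d) (Kt Fq)) ∘ₗ J) c i = polyK Fq (c i) := by
      simp [Lg, J]
    rw [e]
    obtain ⟨n, rfl⟩ : ∃ n : ℕ, m = -(n : ℤ) := ⟨(-m).toNat, by omega⟩
    rw [polyK_coeff]
    apply Polynomial.coeff_eq_zero_of_degree_lt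
    refine lt_of_lt_of_le (Polynomial.mem_degreeLT.1 (c i).2) ?_
    exact_mod_cast (by omega : k ≤ n)
  have hinj : Function.Injective (LinearMap.codRestrict _ _ hJ) := by
    intro a b hab
    have h := congrArg Subtype.val hab
    funext i
    apply Subtype.ext
    apply polyK_inj
    simpa [Lg, J] using congrFun h i
  have := LinearMap.finrank_le_finrank_of_injective hinj
  have e : Module.finrank Fq (Fin d → Polynomial.degreeLT Fq k) = d * k := by
    have hk : Module.finrank Fq (Polynomial.degreeLT Fq k) = k := by
      rw [(Polynomial.degreeLTEquiv Fq k).finrank_eq]; simp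
    have : Module.Finite Fq (Polynomial.degreeLT Fq k) :=
      Module.Finite.equiv (Polynomial.degreeLTEquiv Fq k).symm
    rw [Module.finrank_pi_fintype]; simp only [hk]; simp
  omega

theorem Q_one {d : ℕ} : Q (1 : Matrix (Fin d) (Fin d) (Kt Fq)) 0 := by
  have hsmall : ∀ s : Fin d → ℤ, ∃ k : ℕ, (fun _ => 1 - (k : ℤ)) ≤ s := by
    intro s
    refine ⟨∑ i, (1 - s i).toNat, ?_⟩
    intro i
    have := Finset.single_le_sum (f := fun i => (1 - s i).toNat) (fun _ _ => Nat.zero_le _)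
      (Finset.mem_univ i)
    have h2 : (1 - s i).toNat ≤ ∑ i, (1 - s i).toNat := this
    have h3 : ((1 - s i).toNat : ℤ) ≤ ((∑ i, (1 - s i).toNat : ℕ) : ℤ) := by exact_mod_cast h2
    have h4 := Int.self_le_toNat (1 - s i)
    change 1 - ((∑ i, (1 - s i).toNat : ℕ) : ℤ) ≤ s i
    linarith
  have h1 : Module.Finite Fq (V Fq (1 : Matrix (Fin d) (Fin d) (Kt Fq)) (fun _ => 1)) := by
    rw [V_one_one]; infer_instance
  constructor
  · intro s
    obtain ⟨k, hk⟩ := hsmall s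
    have hfk := (mono (1 : Matrix (Fin d) (Fin d) (Kt Fq)) (fun _ => 1 - (k : ℤ)) (fun _ => 1)
      (fun _ => by simp)).1 h1
    have := (mono _ _ _ hk).2 hfk
    refine ⟨this.1, ?_⟩
    have h2 := this.2
    have h3 := V_one_rank k hfk
    have h4 : ((d * k : ℕ) : ℤ) ≤ _ := Int.ofNat_le.2 h3
    simp only [sub_sub_cancel, Finset.sum_const, Finset.card_univ, Fintype.card_fin,
      nsmul_eq_mul] at h2
    push_cast at h4
    linarith
  · refine ⟨fun _ => 1, ?_⟩
    rw [V_one_one]; simp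

theorem Q_all {d : ℕ} (g : Matrix (Fin d) (Fin d) (Kt Fq)) (hg : g.det ≠ 0) :
    Q g (-g.det.order) := by
  have key : ∀ h : Matrix (Fin d) (Fin d) (Kt Fq), ∀ k, Q h k → Q (g * h) (k - g.det.order) := by
    refine Matrix.diagonal_transvection_induction_of_det_ne_zero
      (fun A => ∀ h : Matrix (Fin d) (Fin d) (Kt Fq), ∀ k, Q h k → Q (A * h) (k - A.det.order))
      g hg ?_ ?_ ?_
    · intro D hD h k hQ
      rw [Matrix.det_diagonal] at hD ⊢
      have hD' : ∀ i, D i ≠ 0 := fun i => Finset.prod_ne_zero_iff.1 hD i (Finset.mem_univ i)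
      rw [order_prod' _ _ hD']
      exact Q_diag D hD' h k hQ
    · intro t h k hQ
      rw [Matrix.TransvectionStruct.det, HahnSeries.order_one, sub_zero]
      exact Q_transvec t.i t.j t.hij t.c h k hQ
    · intro A B hA hB h1 h2 h k hQ
      have := h1 _ _ (h2 h k hQ)
      rw [Matrix.det_mul, HahnSeries.order_mul hA hB, Matrix.mul_assoc]
      convert this using 1
      ring
  simpa using key 1 0 Q_one

theorem all_step {d : ℕ} (g : Matrix (Fin d) (Fin d) (Kt Fq)) (s : Fin d → ℤ)
    (h : ∀ i, V Fq g (s + Pi.single i 1) = V Fq g s) : V Fq g s = ⊥ := by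
  have key : ∀ k : ℕ, ∀ v ∈ V Fq g s, ∀ i, ∀ m < s i + k, (v i).coeff m = 0 := by
    intro k
    induction k with
    | zero => intro v hv i m hm; exact hv.2 i m (by simpa using hm)
    | succ k ih =>
      intro v hv i m hm
      have hx : (fun i => Kx Fq * v i) ∈ V Fq g s := by
        constructor
        · obtain ⟨c, hc⟩ := hv.1
          refine ⟨fun j => Polynomial.X * c j, ?_⟩
          have : (fun i => Kx Fq * v i) = Kx Fq • v := rfl
          rw [this, ← hc]
          change g.mulVec (fun j => polyK Fq (Polynomial.X * c j)) = Kx Fq • g.mulVec _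
          rw [← Matrix.mulVec_smul]
          congr 1
          funext j
          simp [polyK_X]
        · intro j l hl
          rw [Kx, HahnSeries.coeff_single_mul, one_mul]
          rw [← h j] at hv
          exact hv.2 j _ (by simp; omega)
      have := ih _ hx i (m - 1) (by push_cast at hm; omega)
      rw [Kx, HahnSeries.coeff_single_mul, one_mul] at this
      simpa using this
  rw [eq_bot_iff]
  intro v hv
  rw [Submodule.mem_bot]
  funext i
  ext m
  exact key (m + 1 - s i).toNat v hv i m (by have := Int.self_le_toNat (m + 1 - s i); omega)

theorem greedy {d : ℕ} (g : Matrix (Fin d) (Fin d) (Kt Fq)) (hQ : Q g 0) :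
    ∃ s : Fin d → ℤ, ∑ i, (1 - s i) = 0 ∧ V Fq g s = ⊥ := by
  have key : ∀ k : ℕ, ∀ s : Fin d → ℤ, Module.finrank Fq (V Fq g s) = k →
      ∑ i, (1 - s i) = k → ∃ s : Fin d → ℤ, ∑ i, (1 - s i) = 0 ∧ V Fq g s = ⊥ := by
    intro k
    induction k with
    | zero =>
      intro s h1 h2
      have := (hQ.1 s).1
      exact ⟨s, by simpa using h2, Submodule.finrank_eq_zero.1 h1⟩
    | succ k ih =>
      intro s h1 h2
      obtain ⟨i, hi⟩ : ∃ i, V Fq g (s + Pi.single i 1) ≠ V Fq g s := by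
        by_contra hc
        push Not at hc
        rw [all_step g s hc] at h1
        simp at h1
      have := (hQ.1 s).1
      have hlt := Submodule.finrank_lt_finrank_of_lt (lt_of_le_of_ne (V_anti g (le_step s i)) hi)
      have hle := step_rank g s i (hQ.1 s).1
      have e : ∑ j, (1 - (s + Pi.single i 1 : Fin d → ℤ) j) = ∑ j, (1 - s j) - 1 := by
        simp [Finset.sum_add_distrib]; ring
      refine ih (s + Pi.single i 1) (by omega) ?_
      rw [e, h2]; push_cast; ring
  obtain ⟨s, hs⟩ := hQ.2
  have := (hQ.1 s).2
  exact key _ s rfl (by linarith)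

theorem one_lt_q : (1 : ℝ) < (Fintype.card Fq : ℝ) := by
  exact_mod_cast Fintype.one_lt_card

theorem Kabs_le (f : Kt Fq) (n : ℤ) :
    Kabs Fq f ≤ (Fintype.card Fq : ℝ) ^ n ↔ ∀ m < -n, f.coeff m = 0 := by
  unfold Kabs
  have hq := one_lt_q (Fq := Fq)
  split_ifs with h
  · subst h
    simp
    positivity
  · rw [zpow_le_zpow_iff_right₀ hq, ← HahnSeries.le_order_iff_forall h]
    omega

variable (Fq)

/-- The Mordell constant of every unimodular lattice `Λ ⊆ K̃^d` equals
`q^{-d}`: there is an admissible box for `Λ` of volume `q^{-d}`, and every box of volume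
strictly greater than `q^{-d}` contains a nonzero point of `Λ`.
In particular `MG_d = {q^{-d}}`. -/
theorem mordell_constant {d : ℕ} (hd : 2 ≤ d)
    (g : Matrix (Fin d) (Fin d) (Kt Fq)) (hg : Kabs Fq g.det = 1) :
    (∃ r : Fin d → ℝ, (∀ i, ∃ n : ℤ, r i = (Fintype.card Fq : ℝ) ^ n) ∧
      ∏ i, r i = (Fintype.card Fq : ℝ) ^ (-(d : ℤ)) ∧
      {v : Fin d → Kt Fq | ∀ i, Kabs Fq (v i) ≤ r i} ∩ lattice Fq g = {0}) ∧
    (∀ r : Fin d → ℝ, (∀ i, ∃ n : ℤ, r i = (Fintype.card Fq : ℝ) ^ n) →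
      (Fintype.card Fq : ℝ) ^ (-(d : ℤ)) < ∏ i, r i →
      ∃ v ∈ lattice Fq g, v ≠ 0 ∧ ∀ i, Kabs Fq (v i) ≤ r i) := by
  have hq := one_lt_q (Fq := Fq)
  have hq0 : (Fintype.card Fq : ℝ) ≠ 0 := by linarith
  have hdet : g.det ≠ 0 := by
    intro h
    simp [Kabs, h] at hg
  have hord : g.det.order = 0 := by
    rw [Kabs, if_neg hdet, zpow_eq_one_iff_right₀ (by linarith) hq.ne'] at hg
    omega
  have hQ : Q g 0 := by simpa [hord] using Q_all g hdet
  have hprod : ∀ n : Fin d → ℤ, ∏ i, (Fintype.card Fq : ℝ) ^ n i =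
      (Fintype.card Fq : ℝ) ^ (∑ i, n i) := by
    intro n
    induction (Finset.univ : Finset (Fin d)) using Finset.induction_on with
    | empty => simp
    | insert a t ha ih => rw [Finset.prod_insert ha, Finset.sum_insert ha, zpow_add₀ hq0, ih]
  constructor
  · obtain ⟨s, hs, hV⟩ := greedy g hQ
    refine ⟨fun i => (Fintype.card Fq : ℝ) ^ (-s i), fun i => ⟨_, rfl⟩, ?_, ?_⟩
    · rw [hprod]
      congr 1
      simp at hs ⊢
      omega
    · ext v
      have hv : v ∈ V Fq g s ↔ v = 0 := by rw [hV, Submodule.mem_bot]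
      rw [Set.mem_singleton_iff, ← hv]
      simp only [Set.mem_inter_iff, Set.mem_setOf_eq, Kabs_le, neg_neg]
      rw [V, Submodule.mem_inf, mem_lat, mem_Bx, and_comm]
  · intro r hr hlt
    choose n hn using hr
    have hr' : r = fun i => (Fintype.card Fq : ℝ) ^ n i := funext hn
    subst hr'
    rw [hprod, zpow_lt_zpow_iff_right₀ hq] at hlt
    have h1 := hQ.1 (fun i => -n i)
    have h2 : ∑ i, (1 - -n i) = d + ∑ i, n i := by simp [Finset.sum_add_distrib]
    have hne : V Fq g (fun i => -n i) ≠ ⊥ := by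
      intro hb
      have h3 := h1.2
      rw [h2, hb] at h3
      simp at h3
      omega
    obtain ⟨v, hv, hv0⟩ := Submodule.exists_mem_ne_zero_of_ne_bot hne
    exact ⟨v, mem_lat.1 hv.1, hv0, fun i => (Kabs_le _ _).2 (hv.2 i)⟩
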